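/- Let 1 < p < ∞, 0 < θ < 1, and define q by 1/q = (1−θ) + θ/p. For a measurable function f : (0,∞) → ℝ the following are equivalent: (i) C|f| ∈ L^q(0,∞); (ii) there exist measurable f₀, f₁ : (0,∞) → [0,∞) with f₀ ∈ L^1(0,∞), C f₁ ∈ L^{p}(0,∞), and |f(x)| ≤ f₀(x)^{1−θ} f₁(x)^{θ} for almost every x. (That is, (L^1)^{1−θ}(Ces_p)^{θ} = Ces_q on [0,∞).) -/

import Mathlib

open MeasureTheory Set

/-- The Cesàro operator applied to a nonnegative part: `(1/x)∫_0^x g(t) dt` in `[0,∞]`. -/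
noncomputable def cesE (g : ℝ → ℝ) (x : ℝ) : ENNReal :=
  (∫⁻ t in Set.Ioo 0 x, ENNReal.ofReal (g t)) / ENNReal.ofReal x

/-- Membership in the Cesàro space `Ces_p(0,∞)`: `C g ∈ L^p(0,∞)`. -/
def memCes (p : ℝ) (g : ℝ → ℝ) : Prop :=
  (∫⁻ x in Set.Ioi (0:ℝ), cesE g x ^ p) < ⊤

/-!
Write `C` for the Cesàro operator, `C*` for its adjoint, the Copson operator, and
`C_β g = x^β C (t^{-β} g)`.

If `|f| ≤ a^{1-θ} b^θ`, choose `0 < β < 1 - 1/p` and `α > 0` with `(1-θ) α = θ β`. The weights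
cancel in Hölder's inequality, so `C|f| ≤ (C_{-α} a)^{1-θ} (C_β b)^θ`. By Tonelli, `C_{-α}` is
bounded on `L¹`, where `C` itself is not. Integration by parts gives `C_β b = C b + β C_β (C b)`,
and the weighted Hardy inequality bounds the last term in `L^p` by `‖C b‖_p`.

Conversely, given `C g ∈ L^q`, let `H = C* ((C g)^{q-1})`, `a = g H` and `b = g H^{-(1-θ)/θ}`, so
that `g = a^{1-θ} b^θ`. By duality `∫ a = ∫ (C g)^q`. As `H` is decreasing and
`(q-1) H ≥ (C g)^{q-1}`, the function `C b` is at most a constant times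
`(C g)^{1 - (q-1)(1-θ)/θ} = (C g)^{q/p}`, which lies in `L^p`.
-/

open scoped ENNReal

section ENNRealPowers

variable {y u v : ℝ≥0∞}

lemma rpow_neg_le_rpow_neg {s : ℝ} (hs : 0 ≤ s) (huv : u ≤ v) : v ^ (-s) ≤ u ^ (-s) := by
  rw [ENNReal.rpow_neg, ENNReal.rpow_neg]
  exact ENNReal.inv_le_inv.2 (ENNReal.rpow_le_rpow huv hs)

lemma mul_rpow_neg_le_rpow_one_sub {s : ℝ} (hs : s < 1) : y * y ^ (-s) ≤ y ^ (1 - s) := by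
  rcases eq_or_ne y 0 with rfl | h0
  · simp only [zero_mul, zero_le]
  rcases eq_or_ne y ⊤ with rfl | htop
  · simp only [ENNReal.top_rpow_of_pos (sub_pos.2 hs), le_top]
  rw [sub_eq_add_neg, ENNReal.rpow_add _ _ h0 htop, ENNReal.rpow_one]

lemma rpow_one_sub_mul_rpow {θ : ℝ} (hθ0 : 0 ≤ θ) (hθ1 : θ ≤ 1) :
    y ^ (1 - θ) * y ^ θ = y := by
  rw [← ENNReal.rpow_add_of_nonneg _ _ (sub_nonneg.2 hθ1) hθ0, sub_add_cancel, ENNReal.rpow_one]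

/-- The factorization `u = (u v)^{1-θ} (u v^{-(1-θ)/θ})^θ` survives the conventions
`0 * ⊤ = 0` and `0⁻¹ = ⊤` as soon as both factors are finite. -/
lemma mul_rpow_one_sub_mul_rpow_eq_self {θ : ℝ} (hθ0 : 0 < θ) (hθ1 : θ < 1)
    (h₀ : u * v ≠ ⊤) (h₁ : u * v ^ (-((1 - θ) / θ)) ≠ ⊤) :
    (u * v) ^ (1 - θ) * (u * v ^ (-((1 - θ) / θ))) ^ θ = u := by
  have hθ1' : 0 < 1 - θ := sub_pos.2 hθ1
  rcases eq_or_ne u 0 with rfl | hu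
  · simp only [zero_mul, ENNReal.zero_rpow_of_pos hθ0, mul_zero]
  have hv_top : v ≠ ⊤ := by
    rintro rfl
    exact h₀ (ENNReal.mul_top hu)
  have hv_zero : v ≠ 0 := by
    rintro rfl
    rw [ENNReal.zero_rpow_of_neg (neg_lt_zero.2 (div_pos hθ1' hθ0))] at h₁
    exact h₁ (ENNReal.mul_top hu)
  calc (u * v) ^ (1 - θ) * (u * v ^ (-((1 - θ) / θ))) ^ θ
      = (u ^ (1 - θ) * u ^ θ) * (v ^ (1 - θ) * v ^ (-(1 - θ))) := by
        rw [ENNReal.mul_rpow_of_nonneg _ _ hθ1'.le, ENNReal.mul_rpow_of_nonneg _ _ hθ0.le,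
          ← ENNReal.rpow_mul, neg_mul, div_mul_cancel₀ _ hθ0.ne', mul_mul_mul_comm]
    _ = u := by
        rw [rpow_one_sub_mul_rpow hθ0.le hθ1.le, ← ENNReal.rpow_add _ _ hv_zero hv_top,
          add_neg_cancel, ENNReal.rpow_zero, mul_one]

end ENNRealPowers

/-- The Cesàro operator `C` on `[0,∞]`-valued functions, so that `cesE f` is
`cesaro (fun t => ENNReal.ofReal (f t))`. -/
noncomputable def cesaro (g : ℝ → ℝ≥0∞) (x : ℝ) : ℝ≥0∞ :=
  (∫⁻ t in Ioo 0 x, g t) / ENNReal.ofReal x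

/-- The Copson operator `C* h (t) = ∫_t^∞ h(x) dx/x`, the adjoint of the Cesàro operator with
respect to the pairing `∫_0^∞ g h`. -/
noncomputable def copson (h : ℝ → ℝ≥0∞) (t : ℝ) : ℝ≥0∞ :=
  ∫⁻ x in Ioi t, h x / ENNReal.ofReal x

/-- The weighted Cesàro operator `C_β g (x) = x^{β-1} ∫_0^x t^{-β} g(t) dt`, bounded on `L^p` for
`β < 1 - 1/p`. -/
noncomputable def weightedCesaro (β : ℝ) (g : ℝ → ℝ≥0∞) (x : ℝ) : ℝ≥0∞ :=
  ENNReal.ofReal x ^ β * cesaro (fun t => ENNReal.ofReal t ^ (-β) * g t) x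

section Operators

variable {g h : ℝ → ℝ≥0∞} {x t r s δ : ℝ}

@[fun_prop]
lemma measurable_cesaro (g : ℝ → ℝ≥0∞) : Measurable (cesaro g) := by
  have primitive_mono : Monotone fun x : ℝ => ∫⁻ t in Ioo 0 x, g t :=
    fun _ _ hxy => lintegral_mono_set (Ioo_subset_Ioo_right hxy)
  exact primitive_mono.measurable.div ENNReal.measurable_ofReal

lemma antitone_copson (h : ℝ → ℝ≥0∞) : Antitone (copson h) :=
  fun _ _ hst => lintegral_mono_set (Ioi_subset_Ioi hst)

@[fun_prop]
lemma measurable_copson (h : ℝ → ℝ≥0∞) : Measurable (copson h) :=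
  (antitone_copson h).measurable

lemma cesaro_mono (hgh : ∀ t ∈ Ioo 0 x, g t ≤ h t) : cesaro g x ≤ cesaro h x :=
  ENNReal.div_le_div_right (setLIntegral_mono' measurableSet_Ioo hgh) _

lemma cesaro_congr (hgh : ∀ t ∈ Ioo 0 x, g t = h t) : cesaro g x = cesaro h x :=
  congrArg (· / ENNReal.ofReal x) (setLIntegral_congr_fun measurableSet_Ioo hgh)

lemma cesaro_mono_ae (hgh : ∀ᵐ t ∂volume.restrict (Ioi 0), g t ≤ h t) (x : ℝ) :
    cesaro g x ≤ cesaro h x :=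
  ENNReal.div_le_div_right (lintegral_mono_ae <|
    ae_restrict_of_ae_restrict_of_subset Ioo_subset_Ioi_self hgh) _

lemma cesaro_mul_ofReal (hx : 0 < x) : cesaro g x * ENNReal.ofReal x = ∫⁻ t in Ioo 0 x, g t :=
  ENNReal.div_mul_cancel (ENNReal.ofReal_pos.2 hx).ne' ENNReal.ofReal_ne_top

lemma cesaro_eq_lintegral_smul (g : ℝ → ℝ≥0∞) (x : ℝ) :
    cesaro g x = ∫⁻ t, g t ∂((ENNReal.ofReal x)⁻¹ • volume.restrict (Ioo 0 x)) := by
  rw [lintegral_smul_measure, smul_eq_mul, mul_comm, cesaro, div_eq_mul_inv]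

lemma cesaro_rpow_mul_rpow_le (hg : Measurable g) (hh : Measurable h) (hr : 0 ≤ r) (hs : 0 ≤ s)
    (hrs : r + s = 1) (x : ℝ) :
    cesaro (fun t => g t ^ r * h t ^ s) x ≤ cesaro g x ^ r * cesaro h x ^ s := by
  simp only [cesaro_eq_lintegral_smul]
  exact ENNReal.lintegral_mul_norm_pow_le hg.aemeasurable hh.aemeasurable hr hs hrs

lemma cesaro_const_mul {c : ℝ≥0∞} (hc : c ≠ ⊤) (g : ℝ → ℝ≥0∞) (x : ℝ) :
    cesaro (fun t => c * g t) x = c * cesaro g x := by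
  simp only [cesaro_eq_lintegral_smul, lintegral_const_mul' _ _ hc]

lemma copson_const_mul (hh : Measurable h) (c : ℝ≥0∞) (t : ℝ) :
    copson (fun x => c * h x) t = c * copson h t := by
  simp only [copson, mul_div_assoc]
  exact lintegral_const_mul _ (by fun_prop)

lemma cesaro_mul_le_of_monotone {ψ : ℝ → ℝ≥0∞} (hg : Measurable g) (hψ : Monotone ψ) (x : ℝ) :
    cesaro (fun t => g t * ψ t) x ≤ cesaro g x * ψ x :=
  calc cesaro (fun t => g t * ψ t) x ≤ cesaro (fun t => g t * ψ x) x :=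
        cesaro_mono fun _ ht => by gcongr; exact hψ ht.2.le
    _ = cesaro g x * ψ x := by
        simp only [cesaro_eq_lintegral_smul, lintegral_mul_const _ hg]

theorem lintegral_cesaro_mul_eq_lintegral_mul_copson (hg : Measurable g) (hh : Measurable h) :
    ∫⁻ x in Ioi 0, cesaro g x * h x = ∫⁻ t in Ioi 0, g t * copson h t := by
  let K : ℝ × ℝ → ℝ≥0∞ :=
    {z | z.2 < z.1}.indicator fun z => g z.2 * (h z.1 / ENNReal.ofReal z.1)
  have hK : Measurable K :=
    Measurable.indicator (by fun_prop) (measurableSet_lt measurable_snd measurable_fst)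
  have inner_cesaro (x : ℝ) : cesaro g x * h x = ∫⁻ t in Ioi 0, K (x, t) := by
    have : (fun t => K (x, t)) = (Iio x).indicator fun t => g t * (h x / ENNReal.ofReal x) := rfl
    rw [this, setLIntegral_indicator measurableSet_Iio, Iio_inter_Ioi, lintegral_mul_const _ hg,
      cesaro, ← ENNReal.mul_div_right_comm, mul_div_assoc]
  have inner_copson {t : ℝ} (ht : t ∈ Ioi 0) : g t * copson h t = ∫⁻ x in Ioi 0, K (x, t) := by
    have : (fun x => K (x, t)) = (Ioi t).indicator fun x => g t * (h x / ENNReal.ofReal x) := rfl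
    rw [this, setLIntegral_indicator measurableSet_Ioi, Ioi_inter_Ioi, sup_of_le_left (le_of_lt ht),
      lintegral_const_mul _ (by fun_prop), copson]
  calc ∫⁻ x in Ioi 0, cesaro g x * h x = ∫⁻ x in Ioi 0, ∫⁻ t in Ioi 0, K (x, t) :=
        lintegral_congr inner_cesaro
    _ = ∫⁻ t in Ioi 0, ∫⁻ x in Ioi 0, K (x, t) := lintegral_lintegral_swap hK.aemeasurable
    _ = ∫⁻ t in Ioi 0, g t * copson h t :=
        (setLIntegral_congr_fun measurableSet_Ioi fun _ ht => inner_copson ht).symm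

lemma cesaro_rpow {a : ℝ} (ha : -1 < a) (hx : 0 < x) :
    cesaro (fun t => ENNReal.ofReal t ^ a) x =
      ENNReal.ofReal x ^ a / ENNReal.ofReal (a + 1) := by
  have integrable : IntegrableOn (fun t : ℝ => t ^ a) (Ioo 0 x) := by
    rw [← intervalIntegrable_iff_integrableOn_Ioo_of_le hx.le]
    exact intervalIntegral.intervalIntegrable_rpow' ha
  have nonneg : ∀ᵐ t ∂volume.restrict (Ioo 0 x), 0 ≤ t ^ a := by
    filter_upwards [ae_restrict_mem measurableSet_Ioo] with t ht using Real.rpow_nonneg ht.1.le _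
  have integral_eq : ∫ t in Ioo 0 x, t ^ a = x ^ (a + 1) / (a + 1) := by
    rw [← integral_Ioc_eq_integral_Ioo, ← intervalIntegral.integral_of_le hx.le,
      integral_rpow (Or.inl ha), Real.zero_rpow (by linarith), sub_zero]
  have lintegral_eq : ∫⁻ t in Ioo 0 x, ENNReal.ofReal t ^ a =
      ENNReal.ofReal (x ^ (a + 1) / (a + 1)) := by
    rw [← integral_eq, ofReal_integral_eq_lintegral_ofReal integrable nonneg]
    exact setLIntegral_congr_fun measurableSet_Ioo fun t ht => ENNReal.ofReal_rpow_of_pos ht.1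
  rw [cesaro, lintegral_eq, ENNReal.ofReal_rpow_of_pos hx, ← ENNReal.ofReal_div_of_pos hx,
    ← ENNReal.ofReal_div_of_pos (by linarith), Real.rpow_add_one hx.ne', div_right_comm,
    mul_div_cancel_right₀ _ hx.ne']

lemma copson_rpow_neg (hδ : 0 < δ) (ht : 0 < t) :
    copson (fun x => ENNReal.ofReal x ^ (-δ)) t =
      ENNReal.ofReal t ^ (-δ) / ENNReal.ofReal δ := by
  have integrand_eq : ∀ x ∈ Ioi t, ENNReal.ofReal x ^ (-δ) / ENNReal.ofReal x =
      ENNReal.ofReal (x ^ (-δ - 1)) := fun x hx => by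
    have hx0 : 0 < x := ht.trans hx
    rw [ENNReal.ofReal_rpow_of_pos hx0, ← ENNReal.ofReal_div_of_pos hx0,
      Real.rpow_sub_one hx0.ne']
  have nonneg : ∀ᵐ x ∂volume.restrict (Ioi t), 0 ≤ x ^ (-δ - 1) := by
    filter_upwards [ae_restrict_mem measurableSet_Ioi] with x hx
    exact Real.rpow_nonneg (ht.trans hx).le _
  rw [copson, setLIntegral_congr_fun measurableSet_Ioi integrand_eq,
    ← ofReal_integral_eq_lintegral_ofReal (integrableOn_Ioi_rpow_of_lt (by linarith) ht) nonneg,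
    integral_Ioi_rpow_of_lt (by linarith) ht, sub_add_cancel, neg_div_neg_eq,
    ENNReal.ofReal_rpow_of_pos ht, ENNReal.ofReal_div_of_pos hδ]

lemma ofReal_rpow_mul_rpow_neg (ht : 0 < t) (δ : ℝ) :
    ENNReal.ofReal t ^ δ * ENNReal.ofReal t ^ (-δ) = 1 := by
  rw [← ENNReal.rpow_add _ _ (ENNReal.ofReal_pos.2 ht).ne' ENNReal.ofReal_ne_top, add_neg_cancel,
    ENNReal.rpow_zero]

@[fun_prop]
lemma measurable_weightedCesaro (β : ℝ) (g : ℝ → ℝ≥0∞) : Measurable (weightedCesaro β g) := by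
  unfold weightedCesaro
  fun_prop

lemma weightedCesaro_zero (g : ℝ → ℝ≥0∞) : weightedCesaro 0 g = cesaro g := by
  funext x
  simp only [weightedCesaro, neg_zero, ENNReal.rpow_zero, one_mul]

lemma weightedCesaro_one {κ : ℝ} (hκ : κ < 1) (hx : 0 < x) :
    weightedCesaro κ (fun _ => 1) x = (ENNReal.ofReal (1 - κ))⁻¹ := by
  simp only [weightedCesaro, mul_one]
  rw [cesaro_rpow (by linarith) hx, ← mul_div_assoc, ofReal_rpow_mul_rpow_neg hx, one_div,
    neg_add_eq_sub]

lemma ofReal_rpow_add_mul_rpow_mul_rpow (ht : 0 < t) {α β : ℝ} (hr : 0 ≤ r) (hs : 0 ≤ s)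
    (u v : ℝ≥0∞) :
    ENNReal.ofReal t ^ (r * α + s * β) * (u ^ r * v ^ s) =
      (ENNReal.ofReal t ^ α * u) ^ r * (ENNReal.ofReal t ^ β * v) ^ s := by
  rw [ENNReal.mul_rpow_of_nonneg _ _ hr, ENNReal.mul_rpow_of_nonneg _ _ hs, ← ENNReal.rpow_mul,
    ← ENNReal.rpow_mul, mul_mul_mul_comm,
    ENNReal.rpow_add _ _ (ENNReal.ofReal_pos.2 ht).ne' ENNReal.ofReal_ne_top, mul_comm r,
    mul_comm s]

theorem weightedCesaro_rpow_mul_rpow_le (hg : Measurable g) (hh : Measurable h) (hr : 0 ≤ r)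
    (hs : 0 ≤ s) (hrs : r + s = 1) (α β : ℝ) (hx : 0 < x) :
    weightedCesaro (r * α + s * β) (fun t => g t ^ r * h t ^ s) x ≤
      weightedCesaro α g x ^ r * weightedCesaro β h x ^ s :=
  calc weightedCesaro (r * α + s * β) (fun t => g t ^ r * h t ^ s) x
      = ENNReal.ofReal x ^ (r * α + s * β) * cesaro (fun t =>
          (ENNReal.ofReal t ^ (-α) * g t) ^ r * (ENNReal.ofReal t ^ (-β) * h t) ^ s) x := by
        refine congrArg _ (cesaro_congr fun t ht => ?_)
        rw [← ofReal_rpow_add_mul_rpow_mul_rpow ht.1 hr hs, neg_add, mul_neg, mul_neg]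
    _ ≤ ENNReal.ofReal x ^ (r * α + s * β) *
          (cesaro (fun t => ENNReal.ofReal t ^ (-α) * g t) x ^ r *
            cesaro (fun t => ENNReal.ofReal t ^ (-β) * h t) x ^ s) := by
        gcongr
        exact cesaro_rpow_mul_rpow_le (by fun_prop) (by fun_prop) hr hs hrs x
    _ = weightedCesaro α g x ^ r * weightedCesaro β h x ^ s :=
        ofReal_rpow_add_mul_rpow_mul_rpow hx hr hs _ _

theorem lintegral_weightedCesaro_neg (hg : Measurable g) (hδ : 0 < δ) :
    ∫⁻ x in Ioi 0, weightedCesaro (-δ) g x = (∫⁻ t in Ioi 0, g t) / ENNReal.ofReal δ := by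
  simp only [weightedCesaro, neg_neg, mul_comm (ENNReal.ofReal _ ^ (-δ))]
  rw [lintegral_cesaro_mul_eq_lintegral_mul_copson (by fun_prop) (by fun_prop), div_eq_mul_inv,
    ← lintegral_mul_const _ hg]
  refine setLIntegral_congr_fun measurableSet_Ioi fun t (ht : 0 < t) => ?_
  calc ENNReal.ofReal t ^ δ * g t * copson (fun x => ENNReal.ofReal x ^ (-δ)) t
      = (ENNReal.ofReal t ^ δ * ENNReal.ofReal t ^ (-δ)) * (g t * (ENNReal.ofReal δ)⁻¹) := by
        rw [copson_rpow_neg hδ ht, div_eq_mul_inv, mul_mul_mul_comm]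
    _ = g t * (ENNReal.ofReal δ)⁻¹ := by rw [ofReal_rpow_mul_rpow_neg ht, one_mul]

/-- Integration by parts: both sides come from `∫_0^∞ (C g₀) h = ∫_0^∞ g₀ (C* h)` for the
truncation `g₀ = g 1_{(0,x)}`, since `C g₀ (u)` is `C g (u)` for `u ≤ x` and
`(∫_0^x g) / u` afterwards. -/
theorem cesaro_mul_copson_eq (hg : Measurable g) (hh : Measurable h) (hx : 0 < x) :
    cesaro (fun t => g t * copson h t) x =
      cesaro (fun t => cesaro g t * h t) x + cesaro g x * copson h x := by
  let g₀ := (Iio x).indicator g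
  have g₀_before : ∀ u ∈ Ioc 0 x, cesaro g₀ u * h u = cesaro g u * h u := fun u hu => by
    rw [cesaro, setLIntegral_indicator measurableSet_Iio,
      inter_eq_right.2 (Ioo_subset_Iio_self.trans (Iio_subset_Iio hu.2)), cesaro]
  have g₀_after : ∀ u ∈ Ioi x,
      cesaro g₀ u * h u = (∫⁻ t in Ioo 0 x, g t) * (h u / ENNReal.ofReal u) := fun u hu => by
    rw [cesaro, setLIntegral_indicator measurableSet_Iio, inter_comm, Ioo_inter_Iio,
      min_eq_right (le_of_lt hu), ← ENNReal.mul_div_right_comm, mul_div_assoc]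
  have primitive_eq : ∫⁻ t in Ioo 0 x, g t * copson h t =
      (∫⁻ t in Ioo 0 x, cesaro g t * h t) + (∫⁻ t in Ioo 0 x, g t) * copson h x :=
    calc ∫⁻ t in Ioo 0 x, g t * copson h t = ∫⁻ t in Ioi 0, g₀ t * copson h t := by
          simp only [g₀, ← indicator_mul_left]
          rw [setLIntegral_indicator measurableSet_Iio, Iio_inter_Ioi]
      _ = ∫⁻ u in Ioi 0, cesaro g₀ u * h u :=
          (lintegral_cesaro_mul_eq_lintegral_mul_copson
            (hg.indicator measurableSet_Iio) hh).symm
      _ = (∫⁻ u in Ioc 0 x, cesaro g u * h u) +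
            ∫⁻ u in Ioi x, (∫⁻ t in Ioo 0 x, g t) * (h u / ENNReal.ofReal u) := by
          rw [← Ioc_union_Ioi_eq_Ioi hx.le,
            lintegral_union measurableSet_Ioi (Ioc_disjoint_Ioi le_rfl),
            setLIntegral_congr_fun measurableSet_Ioc g₀_before,
            setLIntegral_congr_fun measurableSet_Ioi g₀_after]
      _ = _ := by
          rw [lintegral_const_mul _ (by fun_prop), copson, restrict_Ioo_eq_restrict_Ioc]
  rw [cesaro, primitive_eq, ENNReal.add_div, ENNReal.mul_div_right_comm]
  rfl

theorem weightedCesaro_eq_cesaro_add {β : ℝ} (hg : Measurable g) (hβ : 0 < β) (hx : 0 < x) :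
    weightedCesaro β g x = cesaro g x + ENNReal.ofReal β * weightedCesaro β (cesaro g) x := by
  have copson_eq {t : ℝ} (ht : 0 < t) :
      copson (fun u => ENNReal.ofReal β * ENNReal.ofReal u ^ (-β)) t =
        ENNReal.ofReal t ^ (-β) := by
    rw [copson_const_mul (by fun_prop), copson_rpow_neg hβ ht,
      ENNReal.mul_div_cancel (ENNReal.ofReal_pos.2 hβ).ne' ENNReal.ofReal_ne_top]
  have by_parts : cesaro (fun t => ENNReal.ofReal t ^ (-β) * g t) x =
      ENNReal.ofReal β * cesaro (fun t => ENNReal.ofReal t ^ (-β) * cesaro g t) x +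
        cesaro g x * ENNReal.ofReal x ^ (-β) :=
    calc cesaro (fun t => ENNReal.ofReal t ^ (-β) * g t) x
        = cesaro (fun t => g t *
            copson (fun u => ENNReal.ofReal β * ENNReal.ofReal u ^ (-β)) t) x :=
          cesaro_congr fun t ht => by rw [copson_eq ht.1, mul_comm]
      _ = _ := by
          rw [cesaro_mul_copson_eq hg (by fun_prop) hx, copson_eq hx,
            ← cesaro_const_mul ENNReal.ofReal_ne_top]
          simp only [mul_comm, mul_left_comm]
  rw [weightedCesaro, by_parts, mul_add, mul_left_comm _ (cesaro g x),
    ofReal_rpow_mul_rpow_neg hx, mul_one, mul_left_comm, add_comm, ← weightedCesaro]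

section HardyInequalities

variable {p β : ℝ}

lemma weightedCesaro_rpow_le {κ : ℝ} (hp : 1 ≤ p) (hκ : κ < 1) (hh : Measurable h)
    (hx : 0 < x) :
    weightedCesaro β h x ^ p ≤ ENNReal.ofReal (1 - κ) ^ (-(p - 1)) *
      weightedCesaro (-(κ * (p - 1) - β * p)) (fun t => h t ^ p) x := by
  have hp0 : 0 < p := zero_lt_one.trans_le hp
  have conj_nonneg : 0 ≤ 1 - 1 / p := sub_nonneg.2 ((div_le_one hp0).2 hp)
  have conj_mul : (1 - 1 / p) * p = p - 1 := by field_simp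
  set D := weightedCesaro (-(κ * (p - 1) - β * p)) (fun t => h t ^ p) x
  have hoelder : weightedCesaro β h x ≤
      (ENNReal.ofReal (1 - κ))⁻¹ ^ (1 - 1 / p) * D ^ (1 / p) := by
    have exponent_eq : (1 - 1 / p) * κ + 1 / p * -(κ * (p - 1) - β * p) = β := by
      field_simp
      ring
    have := weightedCesaro_rpow_mul_rpow_le (g := fun _ => 1) (h := fun t => h t ^ p)
      measurable_const (by fun_prop) conj_nonneg (by positivity) (sub_add_cancel _ _) κ
      (-(κ * (p - 1) - β * p)) hx
    simpa only [exponent_eq, weightedCesaro_one hκ hx, ENNReal.one_rpow, one_mul,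
      ← ENNReal.rpow_mul, mul_one_div_cancel hp0.ne', ENNReal.rpow_one] using this
  calc weightedCesaro β h x ^ p
      ≤ ((ENNReal.ofReal (1 - κ))⁻¹ ^ (1 - 1 / p) * D ^ (1 / p)) ^ p := by gcongr
    _ = ENNReal.ofReal (1 - κ) ^ (-(p - 1)) * D := by
        rw [ENNReal.mul_rpow_of_nonneg _ _ hp0.le, ← ENNReal.rpow_mul, ← ENNReal.rpow_mul,
          conj_mul, one_div_mul_cancel hp0.ne', ENNReal.rpow_one, ENNReal.inv_rpow,
          ← ENNReal.rpow_neg]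

theorem exists_lintegral_weightedCesaro_rpow_le (hp : 1 < p) (hβ : β < 1 - 1 / p) :
    ∃ K : ℝ≥0∞, K ≠ ⊤ ∧ ∀ h : ℝ → ℝ≥0∞, Measurable h →
      ∫⁻ x in Ioi 0, weightedCesaro β h x ^ p ≤ K * ∫⁻ x in Ioi 0, h x ^ p := by
  have hp1 : 0 < p - 1 := sub_pos.2 hp
  have hβ' : β * p / (p - 1) < 1 := by
    rw [div_lt_one hp1]
    calc β * p < (1 - 1 / p) * p := by gcongr
      _ = p - 1 := by field_simp
  obtain ⟨κ, hβκ, hκ⟩ := exists_between hβ'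
  have hδ : 0 < κ * (p - 1) - β * p := sub_pos.2 ((div_lt_iff₀ hp1).1 hβκ)
  have const_ne_top : ENNReal.ofReal (1 - κ) ^ (-(p - 1)) ≠ ⊤ := by
    rw [ENNReal.ofReal_rpow_of_pos (sub_pos.2 hκ)]
    exact ENNReal.ofReal_ne_top
  refine ⟨ENNReal.ofReal (1 - κ) ^ (-(p - 1)) * (ENNReal.ofReal (κ * (p - 1) - β * p))⁻¹,
    ENNReal.mul_ne_top const_ne_top (ENNReal.inv_ne_top.2 (ENNReal.ofReal_pos.2 hδ).ne'),
    fun h hh => ?_⟩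
  calc ∫⁻ x in Ioi 0, weightedCesaro β h x ^ p
      ≤ ∫⁻ x in Ioi 0, ENNReal.ofReal (1 - κ) ^ (-(p - 1)) *
          weightedCesaro (-(κ * (p - 1) - β * p)) (fun t => h t ^ p) x :=
        setLIntegral_mono' measurableSet_Ioi fun _ hx =>
          weightedCesaro_rpow_le hp.le hκ hh hx
    _ = _ := by
        rw [lintegral_const_mul' _ _ const_ne_top,
          lintegral_weightedCesaro_neg (by fun_prop) hδ, div_eq_mul_inv, mul_assoc,
          mul_comm (∫⁻ x in Ioi 0, h x ^ p)]

theorem exists_lintegral_weightedCesaro_rpow_le_cesaro (hp : 1 < p) (hβ0 : 0 < β)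
    (hβ : β < 1 - 1 / p) :
    ∃ K : ℝ≥0∞, K ≠ ⊤ ∧ ∀ g : ℝ → ℝ≥0∞, Measurable g →
      ∫⁻ x in Ioi 0, weightedCesaro β g x ^ p ≤ K * ∫⁻ x in Ioi 0, cesaro g x ^ p := by
  obtain ⟨K, hK, hardy⟩ := exists_lintegral_weightedCesaro_rpow_le hp hβ
  have hp0 : 0 < p := zero_lt_one.trans hp
  have pow_ne_top : ENNReal.ofReal β ^ p ≠ ⊤ :=
    ENNReal.rpow_ne_top_of_nonneg hp0.le ENNReal.ofReal_ne_top
  have two_pow_ne_top : (2 : ℝ≥0∞) ^ (p - 1) ≠ ⊤ :=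
    ENNReal.rpow_ne_top_of_nonneg (sub_nonneg.2 hp.le) ENNReal.ofNat_ne_top
  refine ⟨2 ^ (p - 1) * (1 + ENNReal.ofReal β ^ p * K), by finiteness, fun g hg => ?_⟩
  calc ∫⁻ x in Ioi 0, weightedCesaro β g x ^ p
      ≤ ∫⁻ x in Ioi 0, 2 ^ (p - 1) *
          (cesaro g x ^ p + ENNReal.ofReal β ^ p * weightedCesaro β (cesaro g) x ^ p) :=
        setLIntegral_mono' measurableSet_Ioi fun x hx => by
          rw [weightedCesaro_eq_cesaro_add hg hβ0 hx, ← ENNReal.mul_rpow_of_nonneg _ _ hp0.le]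
          exact ENNReal.rpow_add_le_mul_rpow_add_rpow _ _ hp.le
    _ = 2 ^ (p - 1) * ((∫⁻ x in Ioi 0, cesaro g x ^ p) +
          ENNReal.ofReal β ^ p * ∫⁻ x in Ioi 0, weightedCesaro β (cesaro g) x ^ p) := by
        rw [lintegral_const_mul' _ _ two_pow_ne_top, lintegral_add_left (by fun_prop),
          lintegral_const_mul' _ _ pow_ne_top]
    _ ≤ 2 ^ (p - 1) * ((∫⁻ x in Ioi 0, cesaro g x ^ p) +
          ENNReal.ofReal β ^ p * (K * ∫⁻ x in Ioi 0, cesaro g x ^ p)) := by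
        gcongr
        exact hardy _ (measurable_cesaro g)
    _ = _ := by ring

end HardyInequalities

section CalderonProduct

variable {p q θ : ℝ}

lemma one_lt_of_one_div_eq (hp : 1 < p) (hθ0 : 0 < θ) (hθ1 : θ < 1)
    (hq : 1 / q = (1 - θ) + θ / p) : 1 < q := by
  have div_pos : 0 < θ / p := div_pos hθ0 (zero_lt_one.trans hp)
  have div_lt : θ / p < θ := div_lt_self hθ0 hp
  have hq0 : 0 < q := one_div_pos.1 (hq ▸ by linarith)
  rw [← div_lt_one hq0, hq]
  linarith

theorem lintegral_cesaro_rpow_mul_rpow_le_weightedCesaro (hp : 1 < p) (hθ0 : 0 < θ) (hθ1 : θ < 1)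
    (hq : 1 / q = (1 - θ) + θ / p) {α β : ℝ} (weights_cancel : (1 - θ) * α + θ * β = 0)
    (hg : Measurable g) (hh : Measurable h) :
    ∫⁻ x in Ioi 0, cesaro (fun t => g t ^ (1 - θ) * h t ^ θ) x ^ q ≤
      (∫⁻ x in Ioi 0, weightedCesaro α g x) ^ ((1 - θ) * q) *
        (∫⁻ x in Ioi 0, weightedCesaro β h x ^ p) ^ (θ * q / p) := by
  have hp0 : 0 < p := zero_lt_one.trans hp
  have hq0 : 0 < q := zero_lt_one.trans (one_lt_of_one_div_eq hp hθ0 hθ1 hq)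
  have hθ1' : 0 < 1 - θ := sub_pos.2 hθ1
  have exponents_add : (1 - θ) * q + θ * q / p = 1 := by
    rw [mul_div_right_comm, ← add_mul, ← hq, one_div_mul_cancel hq0.ne']
  have pointwise : ∀ x ∈ Ioi 0, cesaro (fun t => g t ^ (1 - θ) * h t ^ θ) x ^ q ≤
      weightedCesaro α g x ^ ((1 - θ) * q) * (weightedCesaro β h x ^ p) ^ (θ * q / p) :=
    fun x hx => by
      rw [← ENNReal.rpow_mul, mul_div_cancel₀ _ hp0.ne', ENNReal.rpow_mul, ENNReal.rpow_mul,
        ← ENNReal.mul_rpow_of_nonneg _ _ hq0.le, ← weightedCesaro_zero, ← weights_cancel]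
      gcongr
      exact weightedCesaro_rpow_mul_rpow_le hg hh hθ1'.le hθ0.le (sub_add_cancel _ _) _ _ hx
  calc ∫⁻ x in Ioi 0, cesaro (fun t => g t ^ (1 - θ) * h t ^ θ) x ^ q
      ≤ ∫⁻ x in Ioi 0, weightedCesaro α g x ^ ((1 - θ) * q) *
          (weightedCesaro β h x ^ p) ^ (θ * q / p) :=
        setLIntegral_mono' measurableSet_Ioi pointwise
    _ ≤ (∫⁻ x in Ioi 0, weightedCesaro α g x) ^ ((1 - θ) * q) *
          (∫⁻ x in Ioi 0, weightedCesaro β h x ^ p) ^ (θ * q / p) :=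
        ENNReal.lintegral_mul_norm_pow_le (by fun_prop) (by fun_prop) (by positivity)
          (by positivity) exponents_add

theorem exists_lintegral_cesaro_rpow_mul_rpow_le (hp : 1 < p) (hθ0 : 0 < θ) (hθ1 : θ < 1)
    (hq : 1 / q = (1 - θ) + θ / p) :
    ∃ K : ℝ≥0∞, K ≠ ⊤ ∧ ∀ a b : ℝ → ℝ≥0∞, Measurable a → Measurable b →
      ∫⁻ x in Ioi 0, cesaro (fun t => a t ^ (1 - θ) * b t ^ θ) x ^ q ≤
        K * ((∫⁻ x in Ioi 0, a x) ^ ((1 - θ) * q) *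
          (∫⁻ x in Ioi 0, cesaro b x ^ p) ^ (θ * q / p)) := by
  have hp0 : 0 < p := zero_lt_one.trans hp
  have hq0 : 0 < q := zero_lt_one.trans (one_lt_of_one_div_eq hp hθ0 hθ1 hq)
  have hθ1' : 0 < 1 - θ := sub_pos.2 hθ1
  obtain ⟨β, hβ0, hβ⟩ := exists_between (sub_pos.2 ((div_lt_one hp0).2 hp))
  have hα : 0 < β * θ / (1 - θ) := by positivity
  set α := β * θ / (1 - θ)
  have weights_cancel : (1 - θ) * -α + θ * β = 0 := by
    simp only [α]
    field_simp
    ring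
  obtain ⟨K, hK, hardy⟩ := exists_lintegral_weightedCesaro_rpow_le_cesaro hp hβ0 hβ
  have α_inv_ne_top : (ENNReal.ofReal α)⁻¹ ≠ ⊤ := ENNReal.inv_ne_top.2 (ENNReal.ofReal_pos.2 hα).ne'
  refine ⟨(ENNReal.ofReal α)⁻¹ ^ ((1 - θ) * q) * K ^ (θ * q / p), ENNReal.mul_ne_top
    (ENNReal.rpow_ne_top_of_nonneg (by positivity) α_inv_ne_top)
    (ENNReal.rpow_ne_top_of_nonneg (by positivity) hK), fun a b ha hb => ?_⟩
  calc ∫⁻ x in Ioi 0, cesaro (fun t => a t ^ (1 - θ) * b t ^ θ) x ^ q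
      ≤ (∫⁻ x in Ioi 0, weightedCesaro (-α) a x) ^ ((1 - θ) * q) *
          (∫⁻ x in Ioi 0, weightedCesaro β b x ^ p) ^ (θ * q / p) :=
        lintegral_cesaro_rpow_mul_rpow_le_weightedCesaro hp hθ0 hθ1 hq weights_cancel ha hb
    _ ≤ ((∫⁻ x in Ioi 0, a x) * (ENNReal.ofReal α)⁻¹) ^ ((1 - θ) * q) *
          (K * ∫⁻ x in Ioi 0, cesaro b x ^ p) ^ (θ * q / p) := by
        rw [lintegral_weightedCesaro_neg ha hα, div_eq_mul_inv]
        gcongr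
        exact hardy b hb
    _ = _ := by
        rw [ENNReal.mul_rpow_of_nonneg _ _ (by positivity),
          ENNReal.mul_rpow_of_nonneg _ _ (by positivity)]
        ring

theorem lintegral_mul_copson_cesaro_rpow (hg : Measurable g) (hq : 1 ≤ q) :
    ∫⁻ t in Ioi 0, g t * copson (fun x => cesaro g x ^ (q - 1)) t =
      ∫⁻ x in Ioi 0, cesaro g x ^ q := by
  rw [← lintegral_cesaro_mul_eq_lintegral_mul_copson hg (by fun_prop)]
  refine lintegral_congr fun x => ?_
  conv_rhs => rw [← add_sub_cancel 1 q,
    ENNReal.rpow_add_of_nonneg _ _ zero_le_one (sub_nonneg.2 hq), ENNReal.rpow_one]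

lemma cesaro_mul_ofReal_le (hx : 0 < x) {y : ℝ} (hxy : x ≤ y) :
    cesaro g x * ENNReal.ofReal x ≤ cesaro g y * ENNReal.ofReal y := by
  rw [cesaro_mul_ofReal hx, cesaro_mul_ofReal (hx.trans_le hxy)]
  exact lintegral_mono_set (Ioo_subset_Ioo_right hxy)

lemma cesaro_rpow_div_le_copson (hs : 0 < s) (hx : 0 < x) :
    cesaro g x ^ s / ENNReal.ofReal s ≤ copson (fun y => cesaro g y ^ s) x := by
  have decay : ∀ y ∈ Ioi x,
      (cesaro g x * ENNReal.ofReal x) ^ s * ENNReal.ofReal y ^ (-s) ≤ cesaro g y ^ s :=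
    fun y hy => by
      rw [ENNReal.rpow_neg, ← div_eq_mul_inv, ← ENNReal.div_rpow_of_nonneg _ _ hs.le]
      gcongr
      exact ENNReal.div_le_of_le_mul (cesaro_mul_ofReal_le hx (le_of_lt hy))
  calc cesaro g x ^ s / ENNReal.ofReal s
      = (cesaro g x * ENNReal.ofReal x) ^ s *
          copson (fun y => ENNReal.ofReal y ^ (-s)) x := by
        rw [copson_rpow_neg hs hx, ENNReal.mul_rpow_of_nonneg _ _ hs.le, ← mul_div_assoc,
          mul_assoc, ofReal_rpow_mul_rpow_neg hx, mul_one]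
    _ = copson (fun y => (cesaro g x * ENNReal.ofReal x) ^ s * ENNReal.ofReal y ^ (-s)) x :=
        (copson_const_mul (by fun_prop) _ _).symm
    _ ≤ copson (fun y => cesaro g y ^ s) x :=
        setLIntegral_mono' measurableSet_Ioi fun y hy =>
          ENNReal.div_le_div_right (decay y hy) _

theorem cesaro_mul_copson_rpow_neg_le {ρ : ℝ} (hg : Measurable g) (hs : 0 < s) (hρ : 0 ≤ ρ)
    (hsρ : s * ρ < 1) (hx : 0 < x) :
    cesaro (fun t => g t * copson (fun y => cesaro g y ^ s) t ^ (-ρ)) x ≤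
      ENNReal.ofReal s ^ ρ * cesaro g x ^ (1 - s * ρ) :=
  calc cesaro (fun t => g t * copson (fun y => cesaro g y ^ s) t ^ (-ρ)) x
      ≤ cesaro g x * copson (fun y => cesaro g y ^ s) x ^ (-ρ) :=
        cesaro_mul_le_of_monotone hg
          (fun _ _ htu => rpow_neg_le_rpow_neg hρ (antitone_copson _ htu)) x
    _ ≤ cesaro g x * (cesaro g x ^ s / ENNReal.ofReal s) ^ (-ρ) :=
        mul_le_mul_right (rpow_neg_le_rpow_neg hρ (cesaro_rpow_div_le_copson hs hx)) _
    _ = ENNReal.ofReal s ^ ρ * (cesaro g x * cesaro g x ^ (-(s * ρ))) := by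
        rw [ENNReal.rpow_neg, ENNReal.div_rpow_of_nonneg _ _ hρ,
          ENNReal.inv_div (Or.inl (by finiteness)) (Or.inl (by positivity)), ← ENNReal.rpow_mul,
          ENNReal.rpow_neg, div_eq_mul_inv, mul_left_comm]
    _ ≤ ENNReal.ofReal s ^ ρ * cesaro g x ^ (1 - s * ρ) := by
        gcongr
        exact mul_rpow_neg_le_rpow_one_sub hsρ

lemma ae_lt_top_of_lintegral_cesaro_rpow_lt_top (hg : Measurable g) (hp : 0 < p)
    (h : ∫⁻ x in Ioi 0, cesaro g x ^ p < ⊤) : ∀ᵐ t ∂volume.restrict (Ioi 0), g t < ⊤ := by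
  have cesaro_lt_top : ∀ᵐ x ∂volume.restrict (Ioi 0), cesaro g x < ⊤ := by
    filter_upwards [ae_lt_top (by fun_prop) h.ne] with x hx
    exact (ENNReal.rpow_lt_top_iff_of_pos hp).1 hx
  have ae_lt_top_Ioo (n : ℕ) : ∀ᵐ t ∂volume.restrict (Ioo 0 (n : ℝ)), g t < ⊤ := by
    have : (ae (volume.restrict (Ioi (n : ℝ)))).NeBot := ae_restrict_neBot.2 (by simp)
    obtain ⟨x, hx, hnx⟩ := ((ae_restrict_of_ae_restrict_of_subset
      (Ioi_subset_Ioi n.cast_nonneg) cesaro_lt_top).and (ae_restrict_mem measurableSet_Ioi)).exists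
    have hx0 : 0 < x := n.cast_nonneg.trans_lt hnx
    refine ae_restrict_of_ae_restrict_of_subset (Ioo_subset_Ioo_right (le_of_lt hnx))
      (ae_lt_top hg ?_)
    rw [← cesaro_mul_ofReal hx0]
    exact ENNReal.mul_ne_top hx.ne ENNReal.ofReal_ne_top
  refine ae_restrict_of_ae_restrict_of_subset (fun t ht => ?_)
    ((ae_restrict_iUnion_iff _ _).2 ae_lt_top_Ioo)
  obtain ⟨n, hn⟩ := exists_nat_gt t
  exact mem_iUnion.2 ⟨n, ht, hn⟩

lemma one_sub_mul_one_sub_div_eq (hp : 1 < p) (hθ0 : 0 < θ) (hθ1 : θ < 1)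
    (hq : 1 / q = (1 - θ) + θ / p) : 1 - (q - 1) * ((1 - θ) / θ) = q / p := by
  have : 0 < p := zero_lt_one.trans hp
  have hq0 : 0 < q := zero_lt_one.trans (one_lt_of_one_div_eq hp hθ0 hθ1 hq)
  field_simp at hq ⊢
  linarith

theorem exists_rpow_mul_rpow_eq_of_lintegral_cesaro_rpow_lt_top (hp : 1 < p) (hθ0 : 0 < θ)
    (hθ1 : θ < 1) (hq : 1 / q = (1 - θ) + θ / p) (hg : Measurable g)
    (h : ∫⁻ x in Ioi 0, cesaro g x ^ q < ⊤) :
    ∃ a b : ℝ → ℝ≥0∞, Measurable a ∧ Measurable b ∧ ∫⁻ t in Ioi 0, a t < ⊤ ∧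
      ∫⁻ x in Ioi 0, cesaro b x ^ p < ⊤ ∧
      ∀ᵐ t ∂volume.restrict (Ioi 0), a t ^ (1 - θ) * b t ^ θ = g t := by
  have hp0 : 0 < p := zero_lt_one.trans hp
  have hq1 : 1 < q := one_lt_of_one_div_eq hp hθ0 hθ1 hq
  have hs : 0 < q - 1 := sub_pos.2 hq1
  have hρ : 0 ≤ (1 - θ) / θ := div_nonneg (sub_nonneg.2 hθ1.le) hθ0.le
  have exponent_eq := one_sub_mul_one_sub_div_eq hp hθ0 hθ1 hq
  have hsρ : (q - 1) * ((1 - θ) / θ) < 1 := by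
    rw [← sub_pos, exponent_eq]
    positivity
  have rpow_eq (y : ℝ≥0∞) : y ^ q = (y ^ (1 - (q - 1) * ((1 - θ) / θ))) ^ p := by
    rw [← ENNReal.rpow_mul, exponent_eq, div_mul_cancel₀ _ hp0.ne']
  set H := copson fun x => cesaro g x ^ (q - 1)
  have hH : Measurable H := measurable_copson _
  have a_integrable : ∫⁻ t in Ioi 0, g t * H t < ⊤ := by
    rwa [lintegral_mul_copson_cesaro_rpow hg hq1.le]
  have b_cesaro : ∫⁻ x in Ioi 0, cesaro (fun t => g t * H t ^ (-((1 - θ) / θ))) x ^ p < ⊤ :=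
    calc ∫⁻ x in Ioi 0, cesaro (fun t => g t * H t ^ (-((1 - θ) / θ))) x ^ p
        ≤ ∫⁻ x in Ioi 0, (ENNReal.ofReal (q - 1) ^ ((1 - θ) / θ)) ^ p * cesaro g x ^ q :=
          setLIntegral_mono' measurableSet_Ioi fun x hx => by
            rw [rpow_eq, ← ENNReal.mul_rpow_of_nonneg _ _ hp0.le]
            gcongr
            exact cesaro_mul_copson_rpow_neg_le hg hs hρ hsρ hx
      _ < ⊤ := by
          rw [lintegral_const_mul' _ _ (by finiteness)]
          finiteness
  refine ⟨_, _, hg.mul hH, by fun_prop, a_integrable, b_cesaro, ?_⟩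
  filter_upwards [ae_lt_top (hg.mul hH) a_integrable.ne,
    ae_lt_top_of_lintegral_cesaro_rpow_lt_top (by fun_prop) hp0 b_cesaro] with t ha hb
  exact mul_rpow_one_sub_mul_rpow_eq_self hθ0 hθ1 ha.ne hb.ne

end CalderonProduct

end Operators

section RealFunctions

variable {p q θ : ℝ}

lemma memCes_toReal {b : ℝ → ℝ≥0∞} (hp : 0 ≤ p) (hb : ∫⁻ x in Ioi 0, cesaro b x ^ p < ⊤) :
    memCes p fun t => (b t).toReal :=
  (lintegral_mono fun _ => ENNReal.rpow_le_rpow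
    (cesaro_mono fun _ _ => ENNReal.ofReal_toReal_le) hp).trans_lt hb

lemma ofReal_rpow_mul_rpow {u v : ℝ} (hu : 0 ≤ u) (hv : 0 ≤ v) (hθ0 : 0 ≤ θ) (hθ1 : θ ≤ 1) :
    ENNReal.ofReal (u ^ (1 - θ) * v ^ θ) =
      ENNReal.ofReal u ^ (1 - θ) * ENNReal.ofReal v ^ θ := by
  rw [ENNReal.ofReal_mul (Real.rpow_nonneg hu _), ENNReal.ofReal_rpow_of_nonneg hu
    (sub_nonneg.2 hθ1), ENNReal.ofReal_rpow_of_nonneg hv hθ0]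

theorem memCes_of_ae_le_rpow_mul_rpow (hp : 1 < p) (hθ0 : 0 < θ) (hθ1 : θ < 1)
    (hq : 1 / q = (1 - θ) + θ / p) {g f₀ f₁ : ℝ → ℝ} (hf₀ : Measurable f₀) (hf₁ : Measurable f₁)
    (f₀_nonneg : ∀ t, 0 ≤ f₀ t) (f₁_nonneg : ∀ t, 0 ≤ f₁ t)
    (f₀_integrable : ∫⁻ t in Ioi 0, ENNReal.ofReal (f₀ t) < ⊤) (f₁_memCes : memCes p f₁)
    (g_le : ∀ᵐ t ∂volume.restrict (Ioi 0), g t ≤ f₀ t ^ (1 - θ) * f₁ t ^ θ) :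
    memCes q g := by
  have : 0 < p := zero_lt_one.trans hp
  have hq0 : 0 < q := zero_lt_one.trans (one_lt_of_one_div_eq hp hθ0 hθ1 hq)
  obtain ⟨K, hK, bound⟩ := exists_lintegral_cesaro_rpow_mul_rpow_le hp hθ0 hθ1 hq
  have ofReal_le : ∀ᵐ t ∂volume.restrict (Ioi 0), ENNReal.ofReal (g t) ≤
      ENNReal.ofReal (f₀ t) ^ (1 - θ) * ENNReal.ofReal (f₁ t) ^ θ := by
    filter_upwards [g_le] with t ht
    rw [← ofReal_rpow_mul_rpow (f₀_nonneg t) (f₁_nonneg t) hθ0.le hθ1.le]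
    exact ENNReal.ofReal_le_ofReal ht
  calc ∫⁻ x in Ioi 0, cesE g x ^ q
      ≤ ∫⁻ x in Ioi 0, cesaro (fun t =>
          ENNReal.ofReal (f₀ t) ^ (1 - θ) * ENNReal.ofReal (f₁ t) ^ θ) x ^ q :=
        lintegral_mono fun x => ENNReal.rpow_le_rpow (cesaro_mono_ae ofReal_le x) hq0.le
    _ ≤ K * ((∫⁻ t in Ioi 0, ENNReal.ofReal (f₀ t)) ^ ((1 - θ) * q) *
          (∫⁻ x in Ioi 0, cesE f₁ x ^ p) ^ (θ * q / p)) :=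
        bound _ _ (by fun_prop) (by fun_prop)
    _ < ⊤ := ENNReal.mul_lt_top hK.lt_top (ENNReal.mul_lt_top
        (ENNReal.rpow_lt_top_of_nonneg (mul_nonneg (sub_nonneg.2 hθ1.le) hq0.le) f₀_integrable.ne)
        (ENNReal.rpow_lt_top_of_nonneg (by positivity) f₁_memCes.ne))

end RealFunctions

/-- `(L^1)^{1−θ}(Ces_p)^{θ} = Ces_q` on `[0,∞)` for `1 < p < ∞`, `0 < θ < 1` and
`1/q = (1−θ) + θ/p`: `C|f| ∈ L^q` iff `|f| ≤ f₀^{1−θ} f₁^{θ}` a.e. on `(0,∞)` for some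
nonnegative measurable `f₀ ∈ L^1(0,∞)` and `f₁` with `Cf₁ ∈ L^p(0,∞)`. -/
theorem stmt14 (p θ q : ℝ) (hp : 1 < p) (hθ0 : 0 < θ) (hθ1 : θ < 1)
    (hq : 1 / q = (1 - θ) + θ / p)
    (f : ℝ → ℝ) (hf : Measurable f) :
    memCes q (fun t => |f t|) ↔
      ∃ f₀ f₁ : ℝ → ℝ, Measurable f₀ ∧ Measurable f₁ ∧
        (∀ t, 0 ≤ f₀ t) ∧ (∀ t, 0 ≤ f₁ t) ∧
        (∫⁻ t in Set.Ioi (0:ℝ), ENNReal.ofReal (f₀ t)) < ⊤ ∧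
        memCes p f₁ ∧
        (∀ᵐ x ∂(MeasureTheory.volume.restrict (Set.Ioi (0:ℝ))),
          |f x| ≤ f₀ x ^ (1 - θ) * f₁ x ^ θ) := by
  constructor
  · intro h
    obtain ⟨a, b, ha, hb, a_integrable, b_cesaro, f_eq⟩ :=
      exists_rpow_mul_rpow_eq_of_lintegral_cesaro_rpow_lt_top hp hθ0 hθ1 hq
        (g := fun t => ENNReal.ofReal |f t|) (by fun_prop) h
    refine ⟨fun t => (a t).toReal, fun t => (b t).toReal, by fun_prop, by fun_prop,
      fun _ => ENNReal.toReal_nonneg, fun _ => ENNReal.toReal_nonneg,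
      (lintegral_mono fun _ => ENNReal.ofReal_toReal_le).trans_lt a_integrable,
      memCes_toReal (zero_le_one.trans hp.le) b_cesaro, ?_⟩
    filter_upwards [f_eq] with t ht
    rw [ENNReal.toReal_rpow, ENNReal.toReal_rpow, ← ENNReal.toReal_mul, ht,
      ENNReal.toReal_ofReal (abs_nonneg _)]
  · rintro ⟨f₀, f₁, hf₀, hf₁, f₀_nonneg, f₁_nonneg, f₀_integrable, f₁_memCes, f_le⟩
    exact memCes_of_ae_le_rpow_mul_rpow hp hθ0 hθ1 hq hf₀ hf₁ f₀_nonneg f₁_nonneg f₀_integrable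
      f₁_memCes f_le
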